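/- (John–Nirenberg inequality) There exist constants c_n, C_n > 0 depending only on the dimension n such that for every f ∈ L¹(Q0) with 0 < ‖f‖_{BMO(Q0)} < ∞ and every t > 0, |{x ∈ Q0 : |f(x) − f_{Q0}| > t}| ≤ C_n · |Q0| · exp(−c_n t / ‖f‖_{BMO(Q0)}). -/

import Mathlib

/-!
The proof is Calderón's stopping-time argument. Put `B = ‖f‖_{BMO(Q0)}` and `K = 2 ^ (n + 1) * B`.
For a subcube `Q` of `Q0`, select the maximal dyadic subcubes of `Q` over which the average of
`|f - f_Q|` exceeds `2 * B`. They are disjoint and `|f - f_Q|` has average at most `B` over `Q`, so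
they fill at most half of `Q` (`stopping_measure`). By maximality the average of `|f - f_Q|` over a
selected cube `D` is at most `2 ^ n * (2 * B) = K` (`stopping_upper`), hence `|f_D - f_Q| ≤ K`.
Outside the selected cubes, Lebesgue differentiation gives `|f - f_Q| ≤ 2 * B ≤ K` almost everywhere
(`ae_le_of_dyadic`). So, up to a null set, a point of `Q` with `|f - f_Q| > (k + 1) * K` lies in
some selected `D` with `|f - f_D| > k * K`, and induction on `k`, over all subcubes of `Q0` at once,
gives `|{x ∈ Q : |f - f_Q| > k * K}| ≤ 2 ^ (-k) * |Q|` (`decay`).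
-/

open MeasureTheory ENNReal Set

noncomputable section

namespace SparseBrudnyi

/-- An axis-parallel cube in `ℝⁿ`, given by its lower corner and (positive) side length. -/
structure Cube (n : ℕ) where
  corner : Fin n → ℝ
  side : ℝ
  side_pos : 0 < side

namespace Cube

/-- The (half-open) cube, as a subset of `ℝⁿ`. -/
def toSet {n : ℕ} (Q : Cube n) : Set (Fin n → ℝ) :=
  Set.univ.pi fun i => Set.Ico (Q.corner i) (Q.corner i + Q.side)

/-- The open interior of a cube. -/
def inter {n : ℕ} (Q : Cube n) : Set (Fin n → ℝ) :=
  Set.univ.pi fun i => Set.Ioo (Q.corner i) (Q.corner i + Q.side)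

/-- The Lebesgue measure `|Q|` of a cube. -/
def vol {n : ℕ} (Q : Cube n) : ℝ≥0∞ := volume Q.toSet

end Cube

variable {n : ℕ}

/-- `Q` is a dyadic subcube of `Q0`, i.e. obtained from `Q0` by `m` successive bisections. -/
def IsDyadicSubcube (Q0 Q : Cube n) : Prop :=
  ∃ m : ℕ, ∃ j : Fin n → ℕ, (∀ i, j i < 2 ^ m) ∧
    Q.side = Q0.side / 2 ^ m ∧
    ∀ i, Q.corner i = Q0.corner i + (j i : ℝ) * Q0.side / 2 ^ m

/-- `Ch_S(Q)`: the maximal (w.r.t. inclusion) cubes of `S` strictly contained in `Q`. -/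
def sparseChildren (S : Set (Cube n)) (Q : Cube n) : Set (Cube n) :=
  {Q' | Q' ∈ S ∧ Q'.toSet ⊂ Q.toSet ∧
    ∀ Q'' ∈ S, Q''.toSet ⊂ Q.toSet → Q'.toSet ⊆ Q''.toSet → Q''.toSet ⊆ Q'.toSet}

/-- `E_Q = Q \ ⋃_{Q' ∈ Ch_S(Q)} Q'`. -/
def core (S : Set (Cube n)) (Q : Cube n) : Set (Fin n → ℝ) :=
  Q.toSet \ ⋃ Q' ∈ sparseChildren S Q, Cube.toSet Q'

/-- A sparse family of dyadic subcubes of `Q0`: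
`Σ_{Q' ∈ Ch_S(Q)} |Q'| ≤ (1/2)|Q|` for all `Q ∈ S`. -/
def IsSparse (Q0 : Cube n) (S : Set (Cube n)) : Prop :=
  S.Countable ∧ (∀ Q ∈ S, IsDyadicSubcube Q0 Q) ∧
    ∀ Q ∈ S, (∑' Q' : sparseChildren S Q, Cube.vol Q'.1) ≤ (1 / 2) * Q.vol

/-- A family sparse of order `lam`:
`Σ_{Q' ∈ Ch_S(Q)} |Q'|^lam ≤ (1/2)|Q|^lam` for all `Q ∈ S`. -/
def IsSparseOfOrder (Q0 : Cube n) (lam : ℝ) (S : Set (Cube n)) : Prop :=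
  S.Countable ∧ (∀ Q ∈ S, IsDyadicSubcube Q0 Q) ∧
    ∀ Q ∈ S, (∑' Q' : sparseChildren S Q, Cube.vol Q'.1 ^ lam) ≤ (1 / 2) * Q.vol ^ lam

/-- The average `f_Q = (1/|Q|) ∫_Q f`. -/
def cubeAvg (Q : Cube n) (f : (Fin n → ℝ) → ℝ) : ℝ :=
  ⨍ x in Q.toSet, f x

/-- The mean oscillation `(1/|Q|) ∫_Q |f - f_Q|`, as an extended nonnegative real. -/
def osc (Q : Cube n) (f : (Fin n → ℝ) → ℝ) : ℝ≥0∞ :=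
  Q.vol⁻¹ * ∫⁻ x in Q.toSet, ‖f x - cubeAvg Q f‖₊

/-- The sparse John–Nirenberg functional `‖f‖_{SJN_p(Q0)}`. -/
def sjnNorm (Q0 : Cube n) (p : ℝ) (f : (Fin n → ℝ) → ℝ) : ℝ≥0∞ :=
  ⨆ (S : Set (Cube n)) (_ : IsSparse Q0 S),
    (∫⁻ x in Q0.toSet,
      (∑' Q : S, (core S Q.1).indicator (fun _ => osc Q.1 f) x) ^ p) ^ (1 / p)

/-- Best approximation error `E_k(f;Q)_q` by polynomials of degree at most `k-1` in `L^q(Q)`. -/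
def polErr (k : ℕ) (q : ℝ) (f : (Fin n → ℝ) → ℝ) (Q : Cube n) : ℝ≥0∞ :=
  ⨅ (m : MvPolynomial (Fin n) ℝ) (_ : m.totalDegree < k),
    eLpNorm (fun x => f x - MvPolynomial.eval x m) (ENNReal.ofReal q)
      (volume.restrict Q.toSet)

/-- The sparse Brudnyi functional `‖f‖_{SV^{k,λ}_{p,q}(Q0)}`. -/
def svNorm (Q0 : Cube n) (k : ℕ) (lam p q : ℝ) (f : (Fin n → ℝ) → ℝ) : ℝ≥0∞ :=
  ⨆ (S : Set (Cube n)) (_ : IsSparse Q0 S),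
    (∫⁻ x in Q0.toSet,
      (∑' Q : S, (core S Q.1).indicator
        (fun _ => Cube.vol Q.1 ^ (lam / (n * q) - 1 / q) * polErr k q f Q.1) x) ^ p) ^ (1 / p)

/-- The fractional sparse Brudnyi functional `‖f‖_{S̃V^{k,λ}_{p,q}(Q0)}`, where the supremum
runs over families sparse of order `1 - λ/n`. -/
def svNormFrac (Q0 : Cube n) (k : ℕ) (lam p q : ℝ) (f : (Fin n → ℝ) → ℝ) : ℝ≥0∞ :=
  ⨆ (S : Set (Cube n)) (_ : IsSparseOfOrder Q0 (1 - lam / n) S),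
    (∫⁻ x in Q0.toSet,
      (∑' Q : S, (core S Q.1).indicator
        (fun _ => Cube.vol Q.1 ^ (lam / (n * q) - 1 / q) * polErr k q f Q.1) x) ^ p) ^ (1 / p)

/-- The dyadic local fractional maximal operator `M_{q,λ,Q0}`. -/
def fracMax (Q0 : Cube n) (q lam : ℝ) (f : (Fin n → ℝ) → ℝ) (x : Fin n → ℝ) : ℝ≥0∞ :=
  ⨆ (Q : Cube n) (_ : IsDyadicSubcube Q0 Q) (_ : x ∈ Q.toSet),
    (Q.vol ^ (lam / n - 1) * ∫⁻ y in Q.toSet, (‖f y‖₊ : ℝ≥0∞) ^ q) ^ (1 / q)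

/-- The BMO seminorm over all subcubes of `Q0`. -/
def bmoNorm (Q0 : Cube n) (f : (Fin n → ℝ) → ℝ) : ℝ≥0∞ :=
  ⨆ (Q : Cube n) (_ : Q.toSet ⊆ Q0.toSet), osc Q f

/-- A packing of `Q0`: a countable family of subcubes with pairwise disjoint interiors. -/
def IsPacking (Q0 : Cube n) (P : Set (Cube n)) : Prop :=
  P.Countable ∧ (∀ Q ∈ P, Q.toSet ⊆ Q0.toSet) ∧
    P.Pairwise fun Q Q' => Disjoint Q.inter Q'.inter

/-- The John–Nirenberg functional `‖f‖_{JN_p(Q0)}`. -/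
def jnNorm (Q0 : Cube n) (p : ℝ) (f : (Fin n → ℝ) → ℝ) : ℝ≥0∞ :=
  ⨆ (P : Set (Cube n)) (_ : IsPacking Q0 P),
    (∑' Q : P, osc Q.1 f ^ p * Cube.vol Q.1) ^ (1 / p)

/-- The Garsia–Rodemich functional `‖f‖_{GaRo_{L(p,∞)}(Q0)}` (written via `p'`). -/
def garoNorm (Q0 : Cube n) (p' : ℝ) (f : (Fin n → ℝ) → ℝ) : ℝ≥0∞ :=
  ⨆ (P : Set (Cube n)) (_ : IsPacking Q0 P),
    (∑' Q : P, ∫⁻ x in (Q.1 : Cube n).toSet, ‖f x - cubeAvg Q.1 f‖₊) /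
      (∑' Q : P, Cube.vol Q.1) ^ (1 / p')


/-! ### Dyadic subcubes -/

/-- The cube of generation `m` and integer multi-index `j` in the dyadic grid of mesh
`Q.side / 2 ^ m` anchored at the corner of `Q`. -/
def dcube (Q : Cube n) (m : ℕ) (j : Fin n → ℤ) : Cube n where
  corner := fun i => Q.corner i + j i * (Q.side / 2 ^ m)
  side := Q.side / 2 ^ m
  side_pos := div_pos Q.side_pos (by positivity)

/-- The multi-index of the unique grid cube of generation `m` that contains `x`. -/
def idx (Q : Cube n) (m : ℕ) (x : Fin n → ℝ) : Fin n → ℤ :=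
  fun i => ⌊(x i - Q.corner i) / (Q.side / 2 ^ m)⌋

lemma mem_dcube (Q : Cube n) (m : ℕ) (j : Fin n → ℤ) (x : Fin n → ℝ) :
    x ∈ (dcube Q m j).toSet ↔ idx Q m x = j := by
  have h : 0 < Q.side / 2 ^ m := (dcube Q m j).side_pos
  simp only [Cube.toSet, Set.mem_univ_pi, Set.mem_Ico, funext_iff, idx, Int.floor_eq_iff,
    le_div_iff₀ h, div_lt_iff₀ h]
  refine forall_congr' fun i => ?_
  simp only [dcube]
  constructor <;> rintro ⟨h1, h2⟩ <;> constructor <;> linarith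

lemma mem_dcube_idx (Q : Cube n) (m : ℕ) (x : Fin n → ℝ) :
    x ∈ (dcube Q m (idx Q m x)).toSet := (mem_dcube _ _ _ _).2 rfl

lemma toSet_dcube_zero (Q : Cube n) : (dcube Q 0 0).toSet = Q.toSet := by
  simp [dcube, Cube.toSet]

/-- Each grid cube lies in a single cube of the previous generation. -/
lemma idx_succ (Q : Cube n) (m : ℕ) (x : Fin n → ℝ) :
    idx Q m x = fun i => idx Q (m + 1) x i / ((2 : ℕ) : ℤ) := by
  funext i
  simp only [idx]
  rw [← Int.floor_div_natCast]
  congr 1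
  have := Q.side_pos.ne'
  field_simp
  push_cast
  ring

lemma idx_eq_of_le (Q : Cube n) {k m : ℕ} (hkm : k ≤ m) {x y : Fin n → ℝ}
    (h : idx Q m x = idx Q m y) : idx Q k x = idx Q k y := by
  induction m, hkm using Nat.le_induction with
  | base => exact h
  | succ m _ ih => exact ih (by rw [idx_succ Q m x, idx_succ Q m y, h])

lemma dcube_subset (Q : Cube n) {k m : ℕ} (hkm : k ≤ m) (x : Fin n → ℝ) :
    (dcube Q m (idx Q m x)).toSet ⊆ (dcube Q k (idx Q k x)).toSet := by
  intro y hy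
  rw [mem_dcube] at hy ⊢
  exact idx_eq_of_le Q hkm hy

lemma idx_zero {Q : Cube n} {x : Fin n → ℝ} (hx : x ∈ Q.toSet) : idx Q 0 x = 0 := by
  rwa [← toSet_dcube_zero, mem_dcube] at hx

lemma dcube_subset_self {Q : Cube n} (m : ℕ) {x : Fin n → ℝ} (hx : x ∈ Q.toSet) :
    (dcube Q m (idx Q m x)).toSet ⊆ Q.toSet := by
  have := dcube_subset Q (Nat.zero_le m) x
  rwa [idx_zero hx, toSet_dcube_zero] at this

lemma vol_eq (Q : Cube n) : Q.vol = ENNReal.ofReal (Q.side ^ n) := by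
  rw [Cube.vol, Cube.toSet, Real.volume_pi_Ico]
  simp [ENNReal.ofReal_pow Q.side_pos.le]

lemma vol_ne_zero (Q : Cube n) : Q.vol ≠ 0 := by
  rw [vol_eq]
  have := Q.side_pos
  simp only [ne_eq, ENNReal.ofReal_eq_zero, not_le]
  positivity

lemma vol_ne_top (Q : Cube n) : Q.vol ≠ ∞ := by
  rw [vol_eq]
  exact ENNReal.ofReal_ne_top

lemma vol_dcube_succ (Q : Cube n) (m : ℕ) (j j' : Fin n → ℤ) :
    (dcube Q m j).vol = 2 ^ n * (dcube Q (m + 1) j').vol := by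
  have h2 : (2 : ℝ≥0∞) = ENNReal.ofReal 2 := by simp
  rw [vol_eq, vol_eq, h2, ← ENNReal.ofReal_pow (by norm_num), ← ENNReal.ofReal_mul (by positivity)]
  congr 1
  simp only [dcube]
  rw [← mul_pow]
  congr 1
  field_simp
  ring

lemma measurableSet_toSet (Q : Cube n) : MeasurableSet Q.toSet :=
  MeasurableSet.univ_pi fun _ => measurableSet_Ico

/-- In the sup metric, a cube is a closed ball about its centre up to a null set. -/
lemma toSet_ae_eq_closedBall (Q : Cube n) :
    Q.toSet =ᵐ[volume] Metric.closedBall (fun i => Q.corner i + Q.side / 2) (Q.side / 2) := by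
  have h : Metric.closedBall (fun i => Q.corner i + Q.side / 2) (Q.side / 2) =
      Set.Icc Q.corner (fun i => Q.corner i + Q.side) := by
    rw [closedBall_pi _ (by linarith [Q.side_pos]), ← Set.pi_univ_Icc]
    congr 1
    funext i
    rw [Real.closedBall_eq_Icc]
    congr 1 <;> ring
  rw [h]
  exact Measure.univ_pi_Ico_ae_eq_Icc

lemma toSet_subset_closedBall (Q : Cube n) :
    Q.toSet ⊆ Metric.closedBall (fun i => Q.corner i + Q.side / 2) (Q.side / 2) := by
  intro x hx
  have h0 : 0 ≤ Q.side / 2 := by linarith [Q.side_pos]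
  rw [closedBall_pi _ h0]
  intro i _
  have := hx i (Set.mem_univ i)
  simp only [Real.closedBall_eq_Icc]
  constructor <;> linarith [this.1, this.2]

/-! ### Averages and oscillation -/

lemma lintegral_le_bmo {Q0 Q : Cube n} (hQ : Q.toSet ⊆ Q0.toSet) (f : (Fin n → ℝ) → ℝ) :
    ∫⁻ x in Q.toSet, ‖f x - cubeAvg Q f‖ₑ ≤ bmoNorm Q0 f * Q.vol := by
  have h : osc Q f ≤ bmoNorm Q0 f := le_iSup₂ (f := fun Q _ => osc Q f) Q hQ
  rw [osc, mul_comm, ← div_eq_mul_inv,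
    ENNReal.div_le_iff (vol_ne_zero Q) (vol_ne_top Q)] at h
  exact h

lemma avg_sub_le {Q : Cube n} {f : (Fin n → ℝ) → ℝ} (hf : IntegrableOn f Q.toSet volume) (c : ℝ) :
    ENNReal.ofReal |cubeAvg Q f - c| * Q.vol ≤ ∫⁻ x in Q.toSet, ‖f x - c‖ₑ := by
  have hv : volume.real Q.toSet ≠ 0 := by
    rw [Measure.real, ENNReal.toReal_ne_zero]
    exact ⟨vol_ne_zero Q, vol_ne_top Q⟩
  have hc : IntegrableOn (fun _ : Fin n → ℝ => c) Q.toSet volume :=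
    integrableOn_const (vol_ne_top Q)
  have h1 : ∫ x in Q.toSet, (f x - c) = (cubeAvg Q f - c) * volume.real Q.toSet := by
    rw [integral_sub hf hc, cubeAvg, setAverage_eq, setIntegral_const, smul_eq_mul, smul_eq_mul]
    field_simp
  have h2 := enorm_integral_le_lintegral_enorm (μ := volume.restrict Q.toSet) (fun x => f x - c)
  rw [h1, enorm_mul, Real.enorm_eq_ofReal_abs, Real.enorm_eq_ofReal_abs,
    abs_of_nonneg measureReal_nonneg, ofReal_measureReal (vol_ne_top Q)] at h2
  exact h2

/-- Lebesgue differentiation along dyadic cubes: a function whose dyadic averages about almost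
every point of a set stay below `a` is itself at most `a` almost everywhere there. -/
lemma ae_le_of_dyadic {Q : Cube n} {g : (Fin n → ℝ) → ℝ} (hg : IntegrableOn g Q.toSet volume)
    {a : ℝ} (ha : 0 ≤ a) :
    ∀ᵐ x, x ∈ Q.toSet →
      (∀ m, ∫⁻ y in (dcube Q m (idx Q m x)).toSet, ‖g y‖ₑ ≤
        ENNReal.ofReal a * (dcube Q m (idx Q m x)).vol) → |g x| ≤ a := by
  -- Cutting off outside `Q` makes the function globally integrable.
  have hF : LocallyIntegrable (Q.toSet.indicator fun x => ‖g x‖) volume :=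
    ((integrable_indicator_iff (measurableSet_toSet Q)).2 hg.norm).locallyIntegrable
  filter_upwards [IsUnifLocDoublingMeasure.ae_tendsto_average volume hF 1] with x hx hxQ hm
  have hlim : Filter.Tendsto (fun m : ℕ => Q.side / 2 ^ m / 2) Filter.atTop
      (nhdsWithin 0 (Set.Ioi 0)) := by
    refine tendsto_nhdsWithin_iff.2 ⟨?_, Filter.Eventually.of_forall fun m => ?_⟩
    · have := (tendsto_pow_atTop_nhds_zero_of_lt_one (r := (1 / 2 : ℝ)) (by norm_num)
        (by norm_num)).const_mul (Q.side / 2)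
      rw [mul_zero] at this
      refine this.congr fun m => ?_
      rw [one_div, inv_pow]
      ring
    · have := Q.side_pos
      simp only [Set.mem_Ioi]
      positivity
  have key := hx (l := Filter.atTop)
    (fun m : ℕ => fun i => (dcube Q m (idx Q m x)).corner i + (dcube Q m (idx Q m x)).side / 2)
    (fun m : ℕ => Q.side / 2 ^ m / 2) hlim (Filter.Eventually.of_forall fun m => by
      rw [one_mul]
      exact toSet_subset_closedBall _ (mem_dcube_idx Q m x))
  rw [Set.indicator_of_mem hxQ] at key
  refine le_of_tendsto key (Filter.Eventually.of_forall fun m => ?_)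
  set D := dcube Q m (idx Q m x) with hD
  have hDQ : D.toSet ⊆ Q.toSet := dcube_subset_self m hxQ
  have e : ⨍ y in Metric.closedBall (fun i => D.corner i + D.side / 2) (Q.side / 2 ^ m / 2),
      Q.toSet.indicator (fun x => ‖g x‖) y = ⨍ y in D.toSet, ‖g y‖ := by
    rw [← setAverage_congr_fun (measurableSet_toSet D)
      (Filter.Eventually.of_forall fun y hy => Set.indicator_of_mem (hDQ hy) (fun x => ‖g x‖))]
    exact (setAverage_congr (toSet_ae_eq_closedBall D)).symm
  have hv : 0 < volume.real D.toSet := ENNReal.toReal_pos (vol_ne_zero D) (vol_ne_top D)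
  rw [e, setAverage_eq, smul_eq_mul, inv_mul_le_iff₀ hv,
    integral_norm_eq_lintegral_enorm (hg.mono_set hDQ).aestronglyMeasurable]
  refine (ENNReal.toReal_mono ?_ (hm m)).trans_eq ?_
  · exact ENNReal.mul_ne_top ENNReal.ofReal_ne_top (vol_ne_top _)
  · rw [ENNReal.toReal_mul, ENNReal.toReal_ofReal ha, mul_comm]
    rfl

/-! ### The Calderón–Zygmund decomposition and the iteration -/

/-- The grid cubes inside `Q` selected by the Calderón–Zygmund stopping rule at height `a`: those
over which the average of `|g|` exceeds `a` while it is at most `a` over every dyadic ancestor.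
A pair `(m, j)` stands for `dcube Q m j`. -/
def stopping (Q : Cube n) (g : (Fin n → ℝ) → ℝ) (a : ℝ≥0∞) : Set (ℕ × (Fin n → ℤ)) :=
  {p | ∃ x ∈ Q.toSet, idx Q p.1 x = p.2 ∧
    a * (dcube Q p.1 p.2).vol < ∫⁻ y in (dcube Q p.1 p.2).toSet, ‖g y‖ₑ ∧
    ∀ k < p.1, ∫⁻ y in (dcube Q k (idx Q k x)).toSet, ‖g y‖ₑ ≤ a * (dcube Q k (idx Q k x)).vol}

lemma stopping_subset {Q : Cube n} {g : (Fin n → ℝ) → ℝ} {a : ℝ≥0∞} {p : ℕ × (Fin n → ℤ)}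
    (hp : p ∈ stopping Q g a) : (dcube Q p.1 p.2).toSet ⊆ Q.toSet := by
  obtain ⟨x, hx, hxp, -⟩ := hp
  rw [← hxp]
  exact dcube_subset_self _ hx

lemma stopping_disjoint (Q : Cube n) (g : (Fin n → ℝ) → ℝ) (a : ℝ≥0∞) :
    (stopping Q g a).PairwiseDisjoint fun p => (dcube Q p.1 p.2).toSet := by
  -- Two selected cubes through a common point are nested, so the smaller one violates minimality.
  have key : ∀ p ∈ stopping Q g a, ∀ q ∈ stopping Q g a, ∀ z,
      z ∈ (dcube Q p.1 p.2).toSet → z ∈ (dcube Q q.1 q.2).toSet → ¬ p.1 < q.1 := by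
    rintro p ⟨-, -, -, hp, -⟩ q ⟨y, -, hyq, -, hq⟩ z hzp hzq hlt
    rw [mem_dcube] at hzp hzq
    have h1 : idx Q p.1 y = p.2 := by
      rw [← hzp]
      exact idx_eq_of_le Q hlt.le (hyq.trans hzq.symm)
    have h2 := hq p.1 hlt
    rw [h1] at h2
    exact absurd hp h2.not_gt
  intro p hp q hq hpq
  refine Set.disjoint_left.2 fun z hzp hzq => hpq ?_
  have h1 : p.1 = q.1 := le_antisymm (not_lt.1 (key q hq p hp z hzq hzp))
    (not_lt.1 (key p hp q hq z hzp hzq))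
  refine Prod.ext h1 ?_
  rw [mem_dcube] at hzp hzq
  rw [← hzp, ← hzq, h1]

/-- The selected cubes have small total measure, by the weak-type bound on disjoint cubes. -/
lemma stopping_measure {Q : Cube n} {g : (Fin n → ℝ) → ℝ} {B : ℝ≥0∞} (hB0 : B ≠ 0) (hB : B ≠ ∞)
    (hg : ∫⁻ y in Q.toSet, ‖g y‖ₑ ≤ B * Q.vol) :
    ∑' p : stopping Q g (2 * B), (dcube Q p.1.1 p.1.2).vol ≤ 2⁻¹ * Q.vol := by
  have h1 : 2 * B * ∑' p : stopping Q g (2 * B), (dcube Q p.1.1 p.1.2).vol ≤ B * Q.vol := by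
    rw [← ENNReal.tsum_mul_left]
    calc _ ≤ ∑' p : stopping Q g (2 * B), ∫⁻ y in (dcube Q p.1.1 p.1.2).toSet, ‖g y‖ₑ := by
          refine ENNReal.tsum_le_tsum fun p => ?_
          obtain ⟨-, -, -, hp, -⟩ := p.2
          exact hp.le
      _ = ∫⁻ y in ⋃ p ∈ stopping Q g (2 * B), (dcube Q p.1 p.2).toSet, ‖g y‖ₑ :=
          (lintegral_biUnion (Set.to_countable _) (fun p _ => measurableSet_toSet _)
            (stopping_disjoint Q g _) _).symm
      _ ≤ ∫⁻ y in Q.toSet, ‖g y‖ₑ :=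
          lintegral_mono_set (Set.iUnion₂_subset fun p hp => stopping_subset hp)
      _ ≤ B * Q.vol := hg
  rw [mul_assoc, mul_left_comm, ENNReal.mul_le_mul_iff_right hB0 hB] at h1
  rw [mul_comm 2⁻¹, ← div_eq_mul_inv,
    ENNReal.le_div_iff_mul_le (Or.inl (by norm_num)) (Or.inl (by norm_num)), mul_comm]
  exact h1

/-- Since the parent of a selected cube was not selected, the average over a selected cube
exceeds the height by at most the factor `2 ^ n`. -/
lemma stopping_upper {Q : Cube n} {g : (Fin n → ℝ) → ℝ} {B : ℝ≥0∞}
    (hg : ∫⁻ y in Q.toSet, ‖g y‖ₑ ≤ B * Q.vol) {p : ℕ × (Fin n → ℤ)}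
    (hp : p ∈ stopping Q g (2 * B)) :
    ∫⁻ y in (dcube Q p.1 p.2).toSet, ‖g y‖ₑ ≤ 2 ^ (n + 1) * B * (dcube Q p.1 p.2).vol := by
  obtain ⟨m, j⟩ := p
  obtain ⟨x, hx, hxp, h1, h2⟩ := hp
  simp only at hxp h1 h2 ⊢
  subst hxp
  cases m with
  | zero =>
    -- The cube `Q` itself is never selected.
    exfalso
    rw [idx_zero hx, Cube.vol, toSet_dcube_zero] at h1
    refine absurd h1 (not_lt.2 (hg.trans ?_))
    rw [mul_comm 2 B, mul_assoc]
    gcongr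
    exact le_mul_of_one_le_left' (by norm_num)
  | succ m =>
    calc _ ≤ ∫⁻ y in (dcube Q m (idx Q m x)).toSet, ‖g y‖ₑ :=
          lintegral_mono_set (dcube_subset Q (Nat.le_succ m) x)
      _ ≤ 2 * B * (dcube Q m (idx Q m x)).vol := h2 m (Nat.lt_succ_self m)
      _ = _ := by rw [vol_dcube_succ Q m _ (idx Q (m + 1) x)]; ring

/-- A point with some large dyadic average lies in a selected cube, namely the one of least
generation. -/
lemma exists_stopping {Q : Cube n} {g : (Fin n → ℝ) → ℝ} {a : ℝ≥0∞} {x : Fin n → ℝ}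
    (hx : x ∈ Q.toSet)
    (h : ∃ m, a * (dcube Q m (idx Q m x)).vol < ∫⁻ y in (dcube Q m (idx Q m x)).toSet, ‖g y‖ₑ) :
    ∃ p ∈ stopping Q g a, x ∈ (dcube Q p.1 p.2).toSet := by
  classical
  exact ⟨(Nat.find h, idx Q (Nat.find h) x),
    ⟨x, hx, rfl, Nat.find_spec h, fun k hk => not_lt.1 (Nat.find_min h hk)⟩, mem_dcube_idx Q _ x⟩

/-- Geometric decay of the distribution function, uniformly over all subcubes of `Q0`. -/
lemma decay {Q0 : Cube n} {f : (Fin n → ℝ) → ℝ} (hf : IntegrableOn f Q0.toSet volume)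
    {b : ℝ} (hb : 0 < b) (hB : bmoNorm Q0 f = ENNReal.ofReal b) (k : ℕ) :
    ∀ Q : Cube n, Q.toSet ⊆ Q0.toSet →
      volume {x ∈ Q.toSet | k * (2 ^ (n + 1) * b) < |f x - cubeAvg Q f|} ≤ 2⁻¹ ^ k * Q.vol := by
  induction k with
  | zero =>
    intro Q _
    rw [pow_zero, one_mul]
    exact measure_mono fun x hx => hx.1
  | succ k ih =>
    intro Q hQ
    have hB0 : bmoNorm Q0 f ≠ 0 := by rw [hB]; simpa using hb
    have hBt : bmoNorm Q0 f ≠ ∞ := by rw [hB]; exact ENNReal.ofReal_ne_top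
    set c := cubeAvg Q f with hc
    set g : (Fin n → ℝ) → ℝ := fun x => f x - c with hgdef
    have hg : ∫⁻ y in Q.toSet, ‖g y‖ₑ ≤ bmoNorm Q0 f * Q.vol := lintegral_le_bmo hQ f
    have hgi : IntegrableOn g Q.toSet volume :=
      (hf.mono_set hQ).sub (integrableOn_const (vol_ne_top Q))
    set S := stopping Q g (2 * bmoNorm Q0 f) with hS
    have h2b : 2 * bmoNorm Q0 f = ENNReal.ofReal (2 * b) := by
      rw [hB, ENNReal.ofReal_mul (by norm_num)]; simp
    -- Almost every bad point lies in a selected cube and is still bad, one step lower, for it.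
    have hcover : {x ∈ Q.toSet | ((k + 1 : ℕ) : ℝ) * (2 ^ (n + 1) * b) < |f x - c|} ≤ᵐ[volume]
        ⋃ p ∈ S, {x ∈ (dcube Q p.1 p.2).toSet |
          k * (2 ^ (n + 1) * b) < |f x - cubeAvg (dcube Q p.1 p.2) f|} := by
      filter_upwards [ae_le_of_dyadic hgi (a := 2 * b) (by positivity)] with x hx hxb
      obtain ⟨hxQ, hxb⟩ : x ∈ Q.toSet ∧ ((k + 1 : ℕ) : ℝ) * (2 ^ (n + 1) * b) < |f x - c| := hxb
      push_cast at hxb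
      have h2n : (1 : ℝ) ≤ 2 ^ n := one_le_pow₀ (by norm_num)
      have hbig : 2 * b ≤ 2 ^ (n + 1) * b := by rw [pow_succ]; nlinarith
      have hk : 0 ≤ (k : ℝ) * (2 ^ (n + 1) * b) := by positivity
      obtain ⟨p, hp, hxp⟩ : ∃ p ∈ S, x ∈ (dcube Q p.1 p.2).toSet := by
        refine exists_stopping hxQ ?_
        by_contra! hcon
        have : |f x - c| ≤ 2 * b := hx hxQ fun m => by rw [← h2b]; exact hcon m
        linarith
      refine Set.mem_iUnion₂.2 ⟨p, hp, hxp, ?_⟩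
      set D := dcube Q p.1 p.2
      have hD : |cubeAvg D f - c| ≤ 2 ^ (n + 1) * b := by
        have h3 := (avg_sub_le (hf.mono_set ((stopping_subset hp).trans hQ)) c).trans
          (stopping_upper hg hp)
        rw [ENNReal.mul_le_mul_iff_left (vol_ne_zero D) (vol_ne_top D), hB] at h3
        have h4 : (2 : ℝ≥0∞) ^ (n + 1) * ENNReal.ofReal b = ENNReal.ofReal (2 ^ (n + 1) * b) := by
          rw [ENNReal.ofReal_mul (by positivity), ENNReal.ofReal_pow (by norm_num)]; simp
        rw [h4] at h3
        exact (ENNReal.ofReal_le_ofReal_iff (by positivity)).1 h3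
      have := abs_sub_le (f x) (cubeAvg D f) c
      linarith
    calc _ ≤ volume (⋃ p ∈ S, {x ∈ (dcube Q p.1 p.2).toSet |
          k * (2 ^ (n + 1) * b) < |f x - cubeAvg (dcube Q p.1 p.2) f|}) := measure_mono_ae hcover
      _ ≤ ∑' p : S, volume {x ∈ (dcube Q p.1.1 p.1.2).toSet |
          k * (2 ^ (n + 1) * b) < |f x - cubeAvg (dcube Q p.1.1 p.1.2) f|} :=
          measure_biUnion_le _ (Set.to_countable S) _
      _ ≤ ∑' p : S, 2⁻¹ ^ k * (dcube Q p.1.1 p.1.2).vol :=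
          ENNReal.tsum_le_tsum fun p => ih _ ((stopping_subset p.2).trans hQ)
      _ = 2⁻¹ ^ k * ∑' p : S, (dcube Q p.1.1 p.1.2).vol := ENNReal.tsum_mul_left
      _ ≤ 2⁻¹ ^ k * (2⁻¹ * Q.vol) := by gcongr; exact stopping_measure hB0 hBt hg
      _ = _ := by rw [pow_succ, mul_assoc]

/-- John–Nirenberg inequality: there are constants `c_n, C_n > 0` depending only on the
dimension `n` such that for every `f ∈ L¹(Q0)` with `0 < ‖f‖_{BMO(Q0)} < ∞` and every
`t > 0`, `|{x ∈ Q0 : |f(x) − f_{Q0}| > t}| ≤ C_n |Q0| exp(−c_n t / ‖f‖_{BMO(Q0)})`. -/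
theorem statement12 {n : ℕ} (hn : 0 < n) :
    ∃ c C : ℝ, 0 < c ∧ 0 < C ∧
      ∀ (Q0 : Cube n) (f : (Fin n → ℝ) → ℝ), IntegrableOn f Q0.toSet volume →
        0 < bmoNorm Q0 f → bmoNorm Q0 f < ∞ →
        ∀ t : ℝ, 0 < t →
          volume {x ∈ Q0.toSet | t < |f x - cubeAvg Q0 f|} ≤
            ENNReal.ofReal C * Q0.vol *
              ENNReal.ofReal (Real.exp (-(c * t) / (bmoNorm Q0 f).toReal)) := by
  -- `decay` loses a factor `1 / 2` per step of length `2 ^ (n + 1) * ‖f‖`; rounding `t` down to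
  -- a multiple of that step costs the factor `C = 2`.
  refine ⟨Real.log 2 / 2 ^ (n + 1), 2, by positivity, by norm_num, ?_⟩
  intro Q0 f hf h0 htop t ht
  set b := (bmoNorm Q0 f).toReal with hbdef
  have hb : 0 < b := ENNReal.toReal_pos h0.ne' htop.ne
  have hB : bmoNorm Q0 f = ENNReal.ofReal b := (ENNReal.ofReal_toReal htop.ne).symm
  have hK : (0 : ℝ) < 2 ^ (n + 1) * b := by positivity
  set k := ⌊t / (2 ^ (n + 1) * b)⌋₊ with hk
  have hk1 : k * (2 ^ (n + 1) * b) ≤ t := by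
    rw [← le_div_iff₀ hK]
    exact Nat.floor_le (by positivity)
  have hk2 : t / (2 ^ (n + 1) * b) < k + 1 := Nat.lt_floor_add_one _
  have hreal : ((2 : ℝ)⁻¹) ^ k ≤ 2 * Real.exp (-(Real.log 2 / 2 ^ (n + 1) * t) / b) := by
    have e1 : ((2 : ℝ)⁻¹) ^ k = 2 * Real.exp (-(Real.log 2 * (k + 1))) := by
      rw [Real.exp_neg, mul_comm (Real.log 2), show ((k : ℝ) + 1) = ((k + 1 : ℕ) : ℝ) by push_cast; rfl,
        Real.exp_nat_mul, Real.exp_log (by norm_num), inv_pow, pow_succ]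
      field_simp
    rw [e1]
    gcongr
    have e2 : -(Real.log 2 / 2 ^ (n + 1) * t) / b = -(Real.log 2 * (t / (2 ^ (n + 1) * b))) := by
      field_simp
    rw [e2]
    have := Real.log_pos (show (1 : ℝ) < 2 by norm_num)
    nlinarith
  calc _ ≤ volume {x ∈ Q0.toSet | k * (2 ^ (n + 1) * b) < |f x - cubeAvg Q0 f|} :=
        measure_mono fun x hx => ⟨hx.1, hk1.trans_lt hx.2⟩
    _ ≤ 2⁻¹ ^ k * Q0.vol := decay hf hb hB k Q0 subset_rfl
    _ = ENNReal.ofReal (2⁻¹ ^ k) * Q0.vol := by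
        rw [ENNReal.ofReal_pow (by norm_num), ENNReal.ofReal_inv_of_pos (by norm_num)]
        simp
    _ ≤ ENNReal.ofReal (2 * Real.exp (-(Real.log 2 / 2 ^ (n + 1) * t) / b)) * Q0.vol := by
        gcongr
    _ = _ := by rw [ENNReal.ofReal_mul (by norm_num)]; ring

end SparseBrudnyi
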